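/- (Generalized Grobman–Hartman Theorem) Let X be a complex Banach space, F : X → X a C¹ diffeomorphism, and p a fixed point of F such that the derivative DF_p : X → X is a generalized hyperbolic invertible bounded linear operator. Then there are a homeomorphism H : X → X and a neighborhood U of p in X such that H ∘ F = DF_p ∘ H on U. -/

import Mathlib

/-!
An operator `T` has a summable *Green function* `G` on `ℤ` when `T ∘ G n - G (n - 1)` is the
identity for `n = 0` and zero otherwise; generalized hyperbolicity provides one, built from the
negative powers of `T` on the unstable part and its nonnegative powers on the stable part.
The series `h = ∑ n, G n ∘ φ ∘ e ^ n` then solves the cohomological equation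
`T ∘ h - h ∘ e = φ` for every homeomorphism `e` and every bounded continuous `φ`.

Let `e = T + f` and `e' = T + g` be homeomorphisms, with `f` and `g` bounded and of small Lipschitz
constant. The map `id + h` conjugates `e` to `e'` as soon as `T ∘ h - h ∘ e = f - g ∘ (id + h)`.
When `T` is not hyperbolic this equation has many bounded solutions, and they need not be
invertible; but only one of them is produced by the Green series from its own right-hand side, by
the contraction principle. These distinguished solutions compose, and the one for `f = g` is `0`, so
exchanging `f` and `g` yields the inverse. Cutting `F` off near `p` gives `e`, and `g = 0` gives the
theorem.
-/

open Filter Topology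

variable {X : Type*} [NormedAddCommGroup X] [NormedSpace ℂ X] [CompleteSpace X]

/-- An invertible bounded linear operator is generalized hyperbolic. -/
def GeneralizedHyperbolic (T : X ≃L[ℂ] X) : Prop :=
  ∃ S U : Submodule ℂ X,
    IsClosed (S : Set X) ∧ IsClosed (U : Set X) ∧ IsCompl S U ∧
    (∀ x ∈ S, T x ∈ S) ∧ (∀ x ∈ U, T.symm x ∈ U) ∧
    ∃ c > (0 : ℝ), ∃ t : ℝ, 0 < t ∧ t < 1 ∧
      (∀ x ∈ S, ∀ n : ℕ, ‖(T ^ n) x‖ ≤ c * t ^ n * ‖x‖) ∧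
      (∀ x ∈ U, ∀ n : ℕ, ‖(T.symm ^ n) x‖ ≤ c * t ^ n * ‖x‖)

open Function
open scoped BoundedContinuousFunction NNReal

theorem semiconj_homeomorph_zpow {Y Z : Type*} [TopologicalSpace Y] [TopologicalSpace Z]
    {H : Y → Z} {e : Y ≃ₜ Y} {e' : Z ≃ₜ Z} (hH : Semiconj H e e') (n : ℤ) :
    Semiconj H (e ^ n : Y ≃ₜ Y) (e' ^ n : Z ≃ₜ Z) := by
  have hH' : Semiconj H (e⁻¹ : Y ≃ₜ Y) (e'⁻¹ : Z ≃ₜ Z) :=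
    hH.inverses_right e.apply_symm_apply e'.symm_apply_apply
  induction n with
  | zero => exact Semiconj.id_right
  | succ n ih => simpa only [zpow_add_one] using! ih.comp_right hH
  | pred n ih => simpa only [zpow_sub_one] using! ih.comp_right hH'

section WeightedComposition

variable {𝕜 E E' Y Z : Type*} [NontriviallyNormedField 𝕜]
  [NormedAddCommGroup E] [NormedSpace 𝕜 E] [NormedAddCommGroup E'] [NormedSpace 𝕜 E']
  [TopologicalSpace Y] [TopologicalSpace Z]

/-- The weighted composition operator `φ ↦ A ∘ φ ∘ c` on bounded continuous functions. -/
noncomputable def weightedComposition (A : E →L[𝕜] E') (c : C(Y, Z)) :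
    (Z →ᵇ E) →L[𝕜] (Y →ᵇ E') :=
  LinearMap.mkContinuous
    { toFun := fun φ => (A.compLeftContinuousBounded Z φ).compContinuous c
      map_add' := fun φ ψ => by ext; simp
      map_smul' := fun a φ => by ext; simp }
    ‖A‖ fun φ => (BoundedContinuousFunction.norm_le (by positivity)).2 fun _ =>
      A.le_opNorm_of_le (φ.norm_coe_le_norm _)

@[simp]
theorem weightedComposition_apply (A : E →L[𝕜] E') (c : C(Y, Z)) (φ : Z →ᵇ E) (y : Y) :
    weightedComposition A c φ y = A (φ (c y)) :=
  rfl

theorem norm_weightedComposition_le (A : E →L[𝕜] E') (c : C(Y, Z)) :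
    ‖weightedComposition A c‖ ≤ ‖A‖ :=
  LinearMap.mkContinuous_norm_le _ (norm_nonneg A) _

end WeightedComposition

section GreenFunction

variable {𝕜 E Y Z : Type*} [NontriviallyNormedField 𝕜] [NormedAddCommGroup E] [NormedSpace 𝕜 E]
  [TopologicalSpace Y] [TopologicalSpace Z] {T : E →L[𝕜] E} {G : ℤ → E →L[𝕜] E}

/-- `G` is a summable Green function of `T`: a fundamental solution of the difference equation
`T (u n) - u (n - 1) = v n`, summable in operator norm. -/
structure IsGreenFunction (T : E →L[𝕜] E) (G : ℤ → E →L[𝕜] E) : Prop where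
  summable_nnnorm : Summable fun n => ‖G n‖₊
  mul_eq (n : ℤ) : T * G n = G (n - 1) + if n = 0 then 1 else 0

/-- The operator `φ ↦ ∑ n, G n ∘ φ ∘ e ^ n` on bounded continuous functions, which for a Green
function `G` of `T` solves the cohomological equation `T ∘ h - h ∘ e = φ`. It is meaningful only if
`G` is summable in norm. -/
noncomputable def greenOperator (G : ℤ → E →L[𝕜] E) (e : Y ≃ₜ Y) : (Y →ᵇ E) →L[𝕜] (Y →ᵇ E) :=
  ∑' n : ℤ, weightedComposition (G n) ((e ^ n : Y ≃ₜ Y) : C(Y, Y))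

theorem nnnorm_greenOperator_le (hG : Summable fun n => ‖G n‖₊) (e : Y ≃ₜ Y) :
    ‖greenOperator G e‖₊ ≤ ∑' n, ‖G n‖₊ :=
  tsum_of_nnnorm_bounded hG.hasSum fun _ => norm_weightedComposition_le _ _

variable [CompleteSpace E]

theorem summable_apply_zpow (hG : Summable fun n => ‖G n‖₊) (e : Y ≃ₜ Y) (φ : Y →ᵇ E) (y : Y) :
    Summable fun n : ℤ => G n (φ ((e ^ n : Y ≃ₜ Y) y)) :=
  .of_nnnorm_bounded (hG.mul_right ‖φ‖₊) fun n =>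
    (G n).le_opNorm_of_le (φ.norm_coe_le_norm _)

theorem greenOperator_apply (hG : Summable fun n => ‖G n‖₊) (e : Y ≃ₜ Y) (φ : Y →ᵇ E) (y : Y) :
    greenOperator G e φ y = ∑' n : ℤ, G n (φ ((e ^ n : Y ≃ₜ Y) y)) := by
  have hsum : Summable fun n : ℤ => weightedComposition (G n) ((e ^ n : Y ≃ₜ Y) : C(Y, Y)) :=
    .of_nnnorm_bounded hG fun _ => norm_weightedComposition_le _ _
  exact ((BoundedContinuousFunction.evalCLM 𝕜 y).comp
    (ContinuousLinearMap.apply 𝕜 (Y →ᵇ E) φ)).map_tsum hsum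

theorem greenOperator_compContinuous (hG : Summable fun n => ‖G n‖₊) {e : Y ≃ₜ Y} {e' : Z ≃ₜ Z}
    {H : C(Y, Z)} (hH : Semiconj H e e') (φ : Z →ᵇ E) :
    (greenOperator G e' φ).compContinuous H = greenOperator G e (φ.compContinuous H) := by
  ext y
  simp only [BoundedContinuousFunction.compContinuous_apply, greenOperator_apply hG,
    (semiconj_homeomorph_zpow hH _).eq]

theorem IsGreenFunction.apply_greenOperator_sub (hG : IsGreenFunction T G) (e : Y ≃ₜ Y)
    (φ : Y →ᵇ E) (y : Y) :
    T (greenOperator G e φ y) - greenOperator G e φ (e y) = φ y := by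
  have hs := summable_apply_zpow hG.summable_nnnorm e φ
  let u : ℤ → E := fun n => T (G n (φ ((e ^ n : Y ≃ₜ Y) y)))
  let v : ℤ → E := fun n => G (n - 1) (φ ((e ^ n : Y ≃ₜ Y) y))
  have hshift (n : ℤ) : v (n + 1) = G n (φ ((e ^ n : Y ≃ₜ Y) (e y))) := by
    simp only [v, add_sub_cancel_right, zpow_add_one, Homeomorph.mul_apply]
  have hv : Summable v :=
    (Equiv.addRight (1 : ℤ)).summable_iff.1 ((hs (e y)).congr fun n => (hshift n).symm)
  have huv (n : ℤ) : u n - v n = if n = 0 then φ y else 0 := by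
    have hn := DFunLike.congr_fun (hG.mul_eq n) (φ ((e ^ n : Y ≃ₜ Y) y))
    rcases eq_or_ne n 0 with rfl | hn0
    · simpa [u, v, sub_eq_iff_eq_add'] using hn
    · simpa [u, v, sub_eq_zero, hn0] using hn
  calc T (greenOperator G e φ y) - greenOperator G e φ (e y)
      = ∑' n, u n - ∑' n, v (n + 1) := by
        simp only [greenOperator_apply hG.summable_nnnorm, T.map_tsum (hs y), hshift, u]
    _ = ∑' n, u n - ∑' n, v n := by rw [← (Equiv.addRight (1 : ℤ)).tsum_eq v]; rfl
    _ = ∑' n, (u n - v n) := ((T.summable (hs y)).tsum_sub hv).symm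
    _ = φ y := by simp only [huv, tsum_ite_eq]

end GreenFunction

section Conjugacy

variable {𝕜 E : Type*} [NontriviallyNormedField 𝕜] [NormedAddCommGroup E] [NormedSpace 𝕜 E]
  {T : E →L[𝕜] E} {G : ℤ → E →L[𝕜] E} {e e' : E ≃ₜ E} {f g l h k : E →ᵇ E} {K : ℝ≥0}

/-- The continuous map `x ↦ x + h x` with displacement `h`. -/
def idAdd (h : E →ᵇ E) : C(E, E) :=
  ContinuousMap.id E + h

@[simp]
theorem idAdd_apply (h : E →ᵇ E) (x : E) : idAdd h x = x + h x :=
  rfl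

/-- The map whose fixed points are the distinguished displacements `h` for which `id + h` conjugates
`e = T + f` to `T + g`: those that the Green series recovers from `T ∘ h - h ∘ e`. -/
noncomputable def conjugacyMap (G : ℤ → E →L[𝕜] E) (e : E ≃ₜ E) (f g h : E →ᵇ E) : E →ᵇ E :=
  greenOperator G e (f - g.compContinuous (idAdd h))

theorem lipschitzWith_compContinuous_idAdd (hg : LipschitzWith K g) :
    LipschitzWith K fun h => g.compContinuous (idAdd h) :=
  .of_dist_le_mul fun h k => (BoundedContinuousFunction.dist_le (by positivity)).2 fun x =>
    calc dist (g (x + h x)) (g (x + k x)) ≤ K * dist (x + h x) (x + k x) := hg.dist_le_mul _ _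
      _ = K * dist (h x) (k x) := by rw [dist_add_left]
      _ ≤ K * dist h k := by gcongr; exact BoundedContinuousFunction.dist_coe_le_dist x

theorem contractingWith_conjugacyMap (hG : Summable fun n => ‖G n‖₊) (e : E ≃ₜ E) (f : E →ᵇ E)
    (hg : LipschitzWith K g) (hK : (∑' n, ‖G n‖₊) * K < 1) :
    ContractingWith ((∑' n, ‖G n‖₊) * K) (conjugacyMap G e f g) := by
  have hsub : LipschitzWith K fun h => f - g.compContinuous (idAdd h) := by
    simpa only [zero_add] using (LipschitzWith.const f).sub (lipschitzWith_compContinuous_idAdd hg)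
  exact ⟨hK, ((greenOperator G e).lipschitz.weaken (nnnorm_greenOperator_le hG e)).comp hsub⟩

theorem isFixedPt_conjugacyMap_zero : IsFixedPt (conjugacyMap G e f f) 0 := by
  have hf : f.compContinuous (idAdd 0) = f := by ext; simp
  rw [IsFixedPt, conjugacyMap, hf, sub_self, map_zero]

variable [CompleteSpace E]

theorem IsGreenFunction.semiconj_idAdd (hG : IsGreenFunction T G) (he : ∀ x, e x = T x + f x)
    (he' : ∀ x, e' x = T x + g x) (hh : IsFixedPt (conjugacyMap G e f g) h) :
    Semiconj (idAdd h) e e' := fun x => by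
  have hsol : T (h x) - h (e x) = f x - g (x + h x) := by
    have := hG.apply_greenOperator_sub e (f - g.compContinuous (idAdd h)) x
    rwa [← conjugacyMap, hh.eq] at this
  calc idAdd h (e x) = T x + f x + h (e x) := by rw [idAdd_apply, he]
    _ = T x + (T (h x) - (f x - g (x + h x))) + f x := by rw [← hsol]; abel
    _ = e' (idAdd h x) := by rw [he', idAdd_apply, T.map_add]; abel

theorem isFixedPt_conjugacyMap_comp (hG : Summable fun n => ‖G n‖₊)
    (hh : IsFixedPt (conjugacyMap G e f g) h) (hk : IsFixedPt (conjugacyMap G e' g l) k)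
    (hsemi : Semiconj (idAdd h) e e') :
    IsFixedPt (conjugacyMap G e f l) (h + k.compContinuous (idAdd h)) := by
  have hsplit : f - l.compContinuous (idAdd (h + k.compContinuous (idAdd h))) =
      (f - g.compContinuous (idAdd h)) +
        (g - l.compContinuous (idAdd k)).compContinuous (idAdd h) := by
    ext x
    simp [add_assoc]
  rw [IsFixedPt, conjugacyMap, hsplit, map_add, ← greenOperator_compContinuous hG hsemi,
    ← conjugacyMap, ← conjugacyMap, hh.eq, hk.eq]

theorem leftInverse_idAdd (hG : Summable fun n => ‖G n‖₊) (hf : LipschitzWith K f)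
    (hK : (∑' n, ‖G n‖₊) * K < 1) (hh : IsFixedPt (conjugacyMap G e f g) h)
    (hk : IsFixedPt (conjugacyMap G e' g f) k) (hsemi : Semiconj (idAdd h) e e') :
    LeftInverse (idAdd k) (idAdd h) := fun x => by
  have hzero : h + k.compContinuous (idAdd h) = 0 :=
    (contractingWith_conjugacyMap hG e f hf hK).fixedPoint_unique'
      (isFixedPt_conjugacyMap_comp hG hh hk hsemi) isFixedPt_conjugacyMap_zero
  calc idAdd k (idAdd h x) = x + (h + k.compContinuous (idAdd h)) x := add_assoc _ _ _
    _ = x := by rw [hzero, BoundedContinuousFunction.coe_zero, Pi.zero_apply, add_zero]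

theorem IsGreenFunction.exists_homeomorph_semiconj (hG : IsGreenFunction T G)
    (hf : LipschitzWith K f) (hg : LipschitzWith K g) (hK : (∑' n, ‖G n‖₊) * K < 1)
    (he : ∀ x, e x = T x + f x) (he' : ∀ x, e' x = T x + g x) :
    ∃ H : E ≃ₜ E, Semiconj H e e' := by
  have hsum := hG.summable_nnnorm
  obtain ⟨h, hh, -⟩ :=
    (contractingWith_conjugacyMap hsum e f hg hK).exists_fixedPoint 0 (edist_ne_top _ _)
  obtain ⟨k, hk, -⟩ :=
    (contractingWith_conjugacyMap hsum e' g hf hK).exists_fixedPoint 0 (edist_ne_top _ _)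
  have hhsemi := hG.semiconj_idAdd he he' hh
  have hksemi := hG.semiconj_idAdd he' he hk
  exact ⟨{ toFun := idAdd h
           invFun := idAdd k
           left_inv := leftInverse_idAdd hsum hf hK hh hk hhsemi
           right_inv := leftInverse_idAdd hsum hg hK hk hh hksemi }, hhsemi⟩

theorem exists_homeomorph_eq_add {T : E ≃L[𝕜] E} {f : E → E} (hf : LipschitzWith K f)
    (hK : ‖(T.symm : E →L[𝕜] E)‖₊ * K < 1) : ∃ e : E ≃ₜ E, ∀ x, e x = T x + f x := by
  have happrox : ApproximatesLinearOn (fun x => T x + f x) (T : E →L[𝕜] E) Set.univ K :=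
    fun x _ y _ => by
      simpa [add_sub_add_comm] using hf.norm_sub_le x y
  have hsmall : Subsingleton E ∨ K < ‖(T.symm : E →L[𝕜] E)‖₊⁻¹ :=
    T.subsingleton_or_nnnorm_symm_pos.imp_right fun hpos => by
      rwa [← one_div, lt_div_iff₀' hpos]
  exact ⟨happrox.toHomeomorph _ hsmall, fun _ => rfl⟩

end Conjugacy

section Splitting

variable {𝕜 E : Type*} [NontriviallyNormedField 𝕜] [NormedAddCommGroup E] [NormedSpace 𝕜 E]
  {T : E ≃L[𝕜] E}

/-- The candidate Green function of `T` for a decomposition `1 = P + (1 - P)`: it is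
`T ^ (-(n + 1)) ∘ (1 - P)` for `n ≥ 0` and `-T ^ (-(n + 1)) ∘ P` for `n < 0`. -/
def greenFunction (T : E ≃L[𝕜] E) (P : E →L[𝕜] E) : ℤ → E →L[𝕜] E
  | .ofNat n => ((T.symm ^ (n + 1) : E ≃L[𝕜] E) : E →L[𝕜] E) ∘L (1 - P)
  | .negSucc n => -(((T ^ n : E ≃L[𝕜] E) : E →L[𝕜] E) ∘L P)

theorem greenFunction_natCast (T : E ≃L[𝕜] E) (P : E →L[𝕜] E) (n : ℕ) :
    greenFunction T P n = ((T.symm ^ (n + 1) : E ≃L[𝕜] E) : E →L[𝕜] E) ∘L (1 - P) :=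
  rfl

theorem greenFunction_negSucc (T : E ≃L[𝕜] E) (P : E →L[𝕜] E) (n : ℕ) :
    greenFunction T P (.negSucc n) = -(((T ^ n : E ≃L[𝕜] E) : E →L[𝕜] E) ∘L P) :=
  rfl

theorem mul_greenFunction (T : E ≃L[𝕜] E) (P : E →L[𝕜] E) (n : ℤ) :
    (T : E →L[𝕜] E) * greenFunction T P n =
      greenFunction T P (n - 1) + if n = 0 then 1 else 0 := by
  ext x
  rcases n with (_ | n) | n
  · calc T ((T.symm ^ 1) (x - P x)) = x - P x := by rw [pow_one, T.apply_symm_apply]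
      _ = -P x + x := by abel
  · have hn : ((n + 1 : ℕ) : ℤ) - 1 = n := by simp
    rw [Int.ofNat_eq_natCast, hn, greenFunction_natCast, greenFunction_natCast, pow_succ',
      if_neg (Int.natCast_ne_zero.2 n.succ_ne_zero), add_zero]
    exact T.apply_symm_apply _
  · have hn : Int.negSucc n - 1 = .negSucc (n + 1) := rfl
    rw [hn, greenFunction_negSucc, greenFunction_negSucc, pow_succ',
      if_neg (Int.negSucc_ne_zero n), add_zero]
    exact T.map_neg _

theorem isGreenFunction_greenFunction {P : E →L[𝕜] E}
    (hP : Summable fun n : ℕ => ‖((T ^ n : E ≃L[𝕜] E) : E →L[𝕜] E) ∘L P‖₊)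
    (hQ : Summable fun n : ℕ => ‖((T.symm ^ n : E ≃L[𝕜] E) : E →L[𝕜] E) ∘L (1 - P)‖₊) :
    IsGreenFunction (T : E →L[𝕜] E) (greenFunction T P) where
  summable_nnnorm := by
    refine .of_nat_of_neg_add_one ?_ ?_
    · have hshift := NNReal.summable_nat_add _ hQ 1
      exact hshift.congr fun n => by rw [greenFunction_natCast]
    · simpa only [← Int.negSucc_eq, greenFunction_negSucc, nnnorm_neg] using hP
  mul_eq := mul_greenFunction T P

theorem summable_nnnorm_comp_of_le {A : ℕ → E →L[𝕜] E} {P : E →L[𝕜] E} {c t : ℝ} (hc : 0 ≤ c)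
    (ht0 : 0 ≤ t) (ht1 : t < 1) (hA : ∀ n x, ‖A n (P x)‖ ≤ c * t ^ n * ‖P x‖) :
    Summable fun n => ‖A n ∘L P‖₊ := by
  have hle (n : ℕ) : ‖A n ∘L P‖ ≤ c * t ^ n * ‖P‖ :=
    ContinuousLinearMap.opNorm_le_bound _ (by positivity) fun x =>
      calc ‖A n (P x)‖ ≤ c * t ^ n * ‖P x‖ := hA n x
        _ ≤ c * t ^ n * (‖P‖ * ‖x‖) := by gcongr; exact P.le_opNorm x
        _ = c * t ^ n * ‖P‖ * ‖x‖ := by ring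
  have hgeom : Summable fun n => c * t ^ n * ‖P‖ :=
    ((summable_geometric_of_lt_one ht0 ht1).mul_left c).mul_right ‖P‖
  exact NNReal.summable_coe.1 (hgeom.of_nonneg_of_le (fun _ => norm_nonneg _) hle)

theorem exists_isGreenFunction_of_isCompl [CompleteSpace E] {S U : Submodule 𝕜 E}
    (hS : IsClosed (S : Set E)) (hU : IsClosed (U : Set E)) (hSU : IsCompl S U) {c t : ℝ}
    (hc : 0 ≤ c) (ht0 : 0 ≤ t) (ht1 : t < 1)
    (hTS : ∀ x ∈ S, ∀ n : ℕ, ‖(T ^ n) x‖ ≤ c * t ^ n * ‖x‖)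
    (hTU : ∀ x ∈ U, ∀ n : ℕ, ‖(T.symm ^ n) x‖ ≤ c * t ^ n * ‖x‖) :
    ∃ G, IsGreenFunction (T : E →L[𝕜] E) G := by
  have htop := Submodule.IsCompl.isTopCompl_of_isClosed hSU hS hU
  let P := S.projectionL U htop
  have hP (x : E) : P x ∈ S := Submodule.projectionL_apply_mem htop x
  have hQ (x : E) : (1 - P) x ∈ U := by
    change x - P x ∈ U
    rw [← Submodule.projectionL_eq_self_sub_projectionL]
    exact Submodule.projectionL_apply_mem htop.symm x
  exact ⟨greenFunction T P, isGreenFunction_greenFunction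
    (summable_nnnorm_comp_of_le hc ht0 ht1 fun n x => hTS _ (hP x) n)
    (summable_nnnorm_comp_of_le hc ht0 ht1 fun n x => hTU _ (hQ x) n)⟩

end Splitting

section RadialRetraction

variable {E : Type*} [NormedAddCommGroup E] [NormedSpace ℝ E] {r : ℝ}

/-- The radial retraction of a normed space onto the closed ball of radius `r > 0` about `0`. -/
noncomputable def radialRetraction (r : ℝ) (x : E) : E :=
  (r / max r ‖x‖) • x

theorem norm_radialRetraction_le (hr : 0 < r) (x : E) : ‖radialRetraction r x‖ ≤ r := by
  have hmax : 0 < max r ‖x‖ := lt_max_of_lt_left hr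
  rw [radialRetraction, norm_smul, Real.norm_of_nonneg (by positivity), div_mul_eq_mul_div,
    div_le_iff₀ hmax]
  gcongr
  exact le_max_right _ _

theorem radialRetraction_of_norm_le (hr : 0 < r) {x : E} (hx : ‖x‖ ≤ r) :
    radialRetraction r x = x := by
  rw [radialRetraction, max_eq_left hx, div_self hr.ne', one_smul]

theorem lipschitzWith_radialRetraction (hr : 0 < r) :
    LipschitzWith 2 (radialRetraction r : E → E) := by
  refine .of_dist_le_mul fun x y => ?_
  set a := max r ‖x‖
  set b := max r ‖y‖
  have ha : 0 < a := lt_max_of_lt_left hr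
  have hb : 0 < b := lt_max_of_lt_left hr
  have hra : r / a ≤ 1 := (div_le_one ha).2 (le_max_left _ _)
  have hyb : ‖y‖ ≤ b := le_max_right _ _
  have hba : |b - a| ≤ ‖x - y‖ :=
    calc |b - a| ≤ |‖y‖ - ‖x‖| := by
          simpa only [sub_self, abs_zero, abs_nonneg, max_eq_right] using
            abs_max_sub_max_le_max r ‖y‖ r ‖x‖
      _ ≤ ‖x - y‖ := by rw [norm_sub_rev]; exact abs_norm_sub_norm_le y x
  have hdecomp : (r / a) • x - (r / b) • y = (r / a) • ((x - y) + ((b - a) / b) • y) := by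
    have : r / b = r / a - r / a * ((b - a) / b) := by field_simp; ring
    rw [this]
    module
  calc dist (radialRetraction r x) (radialRetraction r y)
      = r / a * ‖(x - y) + ((b - a) / b) • y‖ := by
        rw [dist_eq_norm, radialRetraction, radialRetraction, hdecomp, norm_smul,
          Real.norm_of_nonneg (by positivity)]
    _ ≤ 1 * (‖x - y‖ + |b - a| / b * ‖y‖) := by
        gcongr
        refine norm_add_le_of_le le_rfl ?_
        rw [norm_smul, Real.norm_eq_abs, abs_div, abs_of_pos hb]
    _ ≤ 1 * (‖x - y‖ + |b - a| / b * b) := by gcongr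
    _ ≤ 2 * dist x y := by rw [div_mul_cancel₀ _ hb.ne', dist_eq_norm]; linarith

end RadialRetraction

section GrobmanHartman

variable {𝕜 E E' : Type*} [RCLike 𝕜] [NormedAddCommGroup E] [NormedSpace 𝕜 E]
  [NormedAddCommGroup E'] [NormedSpace 𝕜 E']

theorem exists_boundedContinuousFunction_of_hasStrictFDerivAt {F : E → E'} {F' : E →L[𝕜] E'} {p : E}
    (hF : HasStrictFDerivAt F F' p) {K : ℝ≥0} (hK : 0 < K) :
    ∃ f : E →ᵇ E', LipschitzWith K f ∧ ∀ᶠ x in 𝓝 p, F x = F p + F' (x - p) + f (x - p) := by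
  let _ : NormedSpace ℝ E := NormedSpace.restrictScalars ℝ 𝕜 E
  obtain ⟨s, hs, hFs⟩ := hF.approximates_deriv_on_nhds (c := K / 2) (.inr (half_pos hK))
  obtain ⟨r, hr, hrs⟩ := Metric.nhds_basis_closedBall.mem_iff.1 hs
  let R (y : E) : E' := F (p + y) - F p - F' y
  have hR : LipschitzOnWith (K / 2) R (Metric.closedBall 0 r) := by
    have hmem {y : E} (hy : y ∈ Metric.closedBall 0 r) : p + y ∈ s :=
      hrs (by simpa using hy)
    refine .of_dist_le_mul fun y hy z hz => ?_
    have := hFs _ (hmem hy) _ (hmem hz)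
    rw [add_sub_add_left_eq_sub, map_sub] at this
    rwa [dist_eq_norm, dist_eq_norm, sub_sub_sub_comm, sub_sub_sub_cancel_right]
  let ρ : E → E := radialRetraction r
  have hρ (y : E) : ρ y ∈ Metric.closedBall 0 r :=
    mem_closedBall_zero_iff.2 (norm_radialRetraction_le hr y)
  have hlip : LipschitzWith K (R ∘ ρ) := by
    have := hR.comp (s := Set.univ) (lipschitzWith_radialRetraction hr).lipschitzOnWith
      fun y _ => hρ y
    rwa [lipschitzOnWith_univ, div_mul_cancel₀ K two_ne_zero] at this
  have hbound (y z : E) : dist (R (ρ y)) (R (ρ z)) ≤ K / 2 * (r + r) :=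
    calc dist (R (ρ y)) (R (ρ z)) ≤ K / 2 * dist (ρ y) (ρ z) := hR.dist_le_mul _ (hρ y) _ (hρ z)
      _ ≤ K / 2 * (r + r) := by
        gcongr
        exact (dist_triangle_right _ _ 0).trans (add_le_add (hρ y) (hρ z))
  refine ⟨⟨⟨R ∘ ρ, hlip.continuous⟩, _, hbound⟩, hlip, ?_⟩
  filter_upwards [Metric.closedBall_mem_nhds p hr] with x hx
  have hρx : ρ (x - p) = x - p := radialRetraction_of_norm_le hr (by rwa [← dist_eq_norm])
  change F x = F p + F' (x - p) + R (ρ (x - p))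
  rw [hρx]
  simp [R]

theorem generalized_grobman_hartman_general [CompleteSpace E] {F : E → E} {p : E} (hp : F p = p)
    {T : E ≃L[𝕜] E} (hF : HasStrictFDerivAt F (T : E →L[𝕜] E) p) {S U : Submodule 𝕜 E}
    (hS : IsClosed (S : Set E)) (hU : IsClosed (U : Set E)) (hSU : IsCompl S U) {c t : ℝ}
    (hc : 0 ≤ c) (ht0 : 0 ≤ t) (ht1 : t < 1)
    (hTS : ∀ x ∈ S, ∀ n : ℕ, ‖(T ^ n) x‖ ≤ c * t ^ n * ‖x‖)
    (hTU : ∀ x ∈ U, ∀ n : ℕ, ‖(T.symm ^ n) x‖ ≤ c * t ^ n * ‖x‖) :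
    ∃ H : E ≃ₜ E, ∃ V ∈ 𝓝 p, ∀ x ∈ V, H (F x) = T (H x) := by
  obtain ⟨G, hG⟩ := exists_isGreenFunction_of_isCompl hS hU hSU hc ht0 ht1 hTS hTU
  obtain ⟨K, hK0, hK⟩ := exists_pos_mul_lt (zero_lt_one (α := ℝ≥0))
    (max (∑' n, ‖G n‖₊) ‖(T.symm : E →L[𝕜] E)‖₊)
  obtain ⟨f, hf, hFf⟩ := exists_boundedContinuousFunction_of_hasStrictFDerivAt hF hK0
  obtain ⟨e, he⟩ := exists_homeomorph_eq_add hf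
    ((mul_le_mul_left (le_max_right _ _) K).trans_lt hK)
  obtain ⟨H, hH⟩ := hG.exists_homeomorph_semiconj (g := 0) (e' := T.toHomeomorph) hf
    (LipschitzWith.const' 0) ((mul_le_mul_left (le_max_left _ _) K).trans_lt hK) he
    fun x => (add_zero (T x)).symm
  refine ⟨(Homeomorph.subRight p).trans H, _, hFf, fun x hx => ?_⟩
  calc H (F x - p) = H (e (x - p)) := by rw [he, hx, hp, add_assoc, add_sub_cancel_left]; rfl
    _ = T (H (x - p)) := hH (x - p)

end GrobmanHartman

/-- Generalized Grobman–Hartman theorem. -/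
theorem generalized_grobman_hartman (F G : X → X)
    (hGF : Function.LeftInverse G F) (hFG : Function.RightInverse G F)
    (hF : ContDiff ℂ 1 F) (hG : ContDiff ℂ 1 G)
    (p : X) (hp : F p = p) (D : X ≃L[ℂ] X)
    (hD : HasFDerivAt F (D : X →L[ℂ] X) p)
    (hgh : GeneralizedHyperbolic D) :
    ∃ H : X ≃ₜ X, ∃ U ∈ 𝓝 p, ∀ x ∈ U, H (F x) = D (H x) := by
  obtain ⟨S, U, hS, hU, hSU, -, -, c, hc, t, ht0, ht1, hDS, hDU⟩ := hgh
  exact generalized_grobman_hartman_general hp (hF.contDiffAt.hasStrictFDerivAt' hD one_ne_zero)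
    hS hU hSU hc.le ht0.le ht1 hDS hDU
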